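/- In the Černý automaton C_n (n ≥ 3), if a two-element subset S ⊆ Z_n arises as the preimage S = δ_w⁻¹({q}) of some singleton {q} under the map induced by some word w over {a, b}, then S = {i, i+1 mod n} for some i ∈ Z_n, i.e., S is a pair of cyclically adjacent states. -/

import Mathlib

/-!
The preimage of an arc of consecutive states under a letter of the Černý automaton is again an arc.
Pulling back along `a` rotates the arc. The letter `b` pushes `-1` onto its successor `0`, so
pulling back along `b` adds `-1` to an arc containing `0` and removes `-1` from an arc not
containing `0`. In the first case the arc already contains `-1` or starts at `0`; in the second it
avoids `-1` or ends there. Hence the preimage of a singleton under any word is an arc, and an arc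
with two elements is a pair of adjacent states.
-/

/-- The two-letter alphabet of the Černý automaton. -/
inductive Letter
  | a
  | b
deriving DecidableEq

/-- The action of a letter of the Černý automaton `C_n` on the state set `ZMod n`:
`a` sends `i` to `i + 1 (mod n)`, and `b` sends `n - 1` to `0` and fixes every other state. -/
def step (n : ℕ) : Letter → ZMod n → ZMod n
  | Letter.a, p => p + 1
  | Letter.b, p => if p = -1 then 0 else p

/-- The map `δ_w` induced by a word `w`, applying letters left to right. -/
def run (n : ℕ) : List Letter → ZMod n → ZMod n
  | [], p => p
  | x :: w, p => run n w (step n x p)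

/-- The arc `{i, i + 1, …, i + (k - 1)}` of `k` consecutive elements; when `1` has finite additive
order it may wrap around and repeat elements. -/
def arc {R : Type*} [AddMonoidWithOne R] (i : R) (k : ℕ) : Set R :=
  (fun j : ℕ ↦ i + j) '' Set.Iio k

/-- A set is an arc if it consists of finitely many consecutive elements. The length is the
cardinality of the set, which rules out repetitions; an infinite set, whose `Set.ncard` is `0`, is
not an arc because `arc i 0` is empty. -/
def IsArc {R : Type*} [AddMonoidWithOne R] (S : Set R) : Prop :=
  ∃ i, S = arc i S.ncard

section Arc

variable {R : Type*}

section AddMonoidWithOne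

variable [AddMonoidWithOne R]

theorem add_one_add_natCast (i : R) (k : ℕ) : i + 1 + k = i + k + 1 := by
  rw [add_assoc, add_assoc, ← Nat.cast_add_one, Nat.add_comm, Nat.cast_add, Nat.cast_one]

theorem finite_arc (i : R) (k : ℕ) : (arc i k).Finite :=
  (Set.finite_Iio k).image _

theorem arc_zero (i : R) : arc i 0 = ∅ := by
  simp [arc]

theorem arc_succ (i : R) (k : ℕ) : arc i (k + 1) = insert (i + k) (arc i k) := by
  rw [arc, Set.Iio_add_one_eq_Iic, ← Set.Iio_insert, Set.image_insert_eq, arc]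

theorem arc_subset_arc_succ (i : R) (k : ℕ) : arc i k ⊆ arc i (k + 1) :=
  arc_succ i k ▸ Set.subset_insert _ _

theorem arc_succ_left (i : R) (k : ℕ) : arc i (k + 1) = insert i (arc (i + 1) k) := by
  induction k with
  | zero => simp [arc_succ, arc_zero]
  | succ k ih =>
    rw [arc_succ, ih, arc_succ, Nat.cast_add_one, ← add_assoc, ← add_one_add_natCast,
      Set.insert_comm]

theorem arc_one (i : R) : arc i 1 = {i} := by
  rw [arc_succ_left, arc_zero, insert_empty_eq]

theorem arc_two (i : R) : arc i 2 = {i, i + 1} := by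
  rw [arc_succ_left, arc_one]

theorem image_add_one_arc (i : R) (k : ℕ) : (· + 1) '' arc i k = arc (i + 1) k := by
  induction k with
  | zero => simp only [arc_zero, Set.image_empty]
  | succ k ih =>
    rw [arc_succ, arc_succ, Set.image_insert_eq, ih, add_one_add_natCast]

theorem add_one_mem_arc_succ {i p : R} {k : ℕ} (hp : p ∈ arc i k) : p + 1 ∈ arc i (k + 1) := by
  rw [arc_succ_left, ← image_add_one_arc]
  exact Set.mem_insert_of_mem _ (Set.mem_image_of_mem _ hp)

theorem isArc_singleton (i : R) : IsArc {i} :=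
  ⟨i, by rw [Set.ncard_singleton, arc_one]⟩

theorem IsArc.finite {S : Set R} (hS : IsArc S) : S.Finite := by
  obtain ⟨i, hi⟩ := hS
  exact hi ▸ finite_arc i S.ncard

theorem IsArc.sdiff_singleton_of_add_one_notMem {S : Set R} (hS : IsArc S) {p : R}
    (hp : p + 1 ∉ S) : IsArc (S \ {p}) := by
  by_cases hpS : p ∈ S
  · have hcard : (S \ {p}).ncard + 1 = S.ncard :=
      Set.ncard_sdiff_singleton_add_one hpS hS.finite
    obtain ⟨i, hi⟩ := hS
    set k := (S \ {p}).ncard with hk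
    rw [← hcard] at hi
    have p_notMem : p ∉ arc i k := fun h ↦ hp (hi ▸ add_one_mem_arc_succ h)
    have p_eq : p = i + k := by
      rw [hi, arc_succ] at hpS
      exact hpS.resolve_right p_notMem
    refine ⟨i, ?_⟩
    rw [← hk, hi, arc_succ, ← p_eq, Set.insert_sdiff_self_of_notMem p_notMem]
  · rwa [Set.sdiff_singleton_eq_self hpS]

end AddMonoidWithOne

variable [AddGroupWithOne R]

theorem preimage_add_one_arc (i : R) (k : ℕ) : (· + 1) ⁻¹' arc (i + 1) k = arc i k := by
  rw [← image_add_one_arc, Set.preimage_image_eq _ (add_left_injective 1)]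

theorem IsArc.preimage_add_one {S : Set R} (hS : IsArc S) : IsArc ((· + 1) ⁻¹' S) := by
  obtain ⟨i, hi⟩ := hS
  have hcard : ((· + 1) ⁻¹' S).ncard = S.ncard :=
    Set.ncard_preimage_of_injective_subset_range (add_left_injective 1)
      fun p _ ↦ ⟨p - 1, sub_add_cancel p 1⟩
  refine ⟨i - 1, ?_⟩
  rw [hcard, ← preimage_add_one_arc, sub_add_cancel, ← hi]

theorem IsArc.insert_of_add_one_mem {S : Set R} (hS : IsArc S) {p : R} (hp : p + 1 ∈ S) :
    IsArc (insert p S) := by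
  by_cases hpS : p ∈ S
  · rwa [Set.insert_eq_of_mem hpS]
  · have hcard : (insert p S).ncard = S.ncard + 1 := Set.ncard_insert_of_notMem hpS hS.finite
    obtain ⟨k, hk⟩ : ∃ k, S.ncard = k + 1 :=
      Nat.exists_eq_add_one.mpr ((Set.ncard_pos hS.finite).mpr ⟨_, hp⟩)
    obtain ⟨i, hi⟩ := hS
    have p_notMem : p ∉ arc i k := fun h ↦ hpS (hi ▸ hk ▸ arc_subset_arc_succ i k h)
    have start : p + 1 = i := by
      rw [hi, hk, arc_succ_left] at hp
      refine hp.resolve_right fun h ↦ p_notMem ?_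
      rwa [← preimage_add_one_arc]
    refine ⟨p, ?_⟩
    rw [hcard, arc_succ_left, start, ← hi]

end Arc

section Automaton

variable {n : ℕ} {S : Set (ZMod n)}

theorem preimage_step_b_of_zero_mem (h : 0 ∈ S) : step n Letter.b ⁻¹' S = insert (-1) S := by
  ext p
  by_cases hp : p = -1 <;> simp [step, hp, h]

theorem preimage_step_b_of_zero_notMem (h : 0 ∉ S) : step n Letter.b ⁻¹' S = S \ {-1} := by
  ext p
  by_cases hp : p = -1 <;> simp [step, hp, h]

theorem IsArc.preimage_step (hS : IsArc S) (x : Letter) : IsArc (step n x ⁻¹' S) := by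
  cases x with
  | a => exact hS.preimage_add_one
  | b =>
    by_cases h : 0 ∈ S
    · rw [preimage_step_b_of_zero_mem h]
      exact hS.insert_of_add_one_mem (by rwa [neg_add_cancel])
    · rw [preimage_step_b_of_zero_notMem h]
      exact hS.sdiff_singleton_of_add_one_notMem (by rwa [neg_add_cancel])

theorem IsArc.preimage_run (hS : IsArc S) (w : List Letter) : IsArc (run n w ⁻¹' S) := by
  induction w with
  | nil => exact hS
  | cons x w ih => exact ih.preimage_step x

end Automaton

theorem cerny_two_element_preimage_adjacent_general (n : ℕ) (w : List Letter) (q : ZMod n)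
    (k : ℕ) (hcard : {p : ZMod n | run n w p = q}.ncard = k) :
    ∃ i : ZMod n, {p : ZMod n | run n w p = q} = arc i k :=
  hcard ▸ (isArc_singleton q).preimage_run w

/-- In the Černý automaton `C_n` (`n ≥ 3`), if a two-element subset of `ZMod n` is the
preimage of a singleton under the map induced by some word, then it is a pair of
cyclically adjacent states `{i, i + 1}`. -/
theorem cerny_two_element_preimage_adjacent (n : ℕ) (hn : 3 ≤ n) (w : List Letter)
    (q : ZMod n) (hcard : {p : ZMod n | run n w p = q}.ncard = 2) :
    ∃ i : ZMod n, {p : ZMod n | run n w p = q} = {i, i + 1} := by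
  obtain ⟨i, hi⟩ := cerny_two_element_preimage_adjacent_general n w q 2 hcard
  exact ⟨i, hi.trans (arc_two i)⟩
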